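/- arXiv:1311.2011 — 3 statements merged into one kernel-verified Lean document; each statement's English description precedes it below -/
import Mathlib

section
/- Let X be a Tychonoff topological space, let 𝔅 be a bornology with compact base on X, and let α be a countable ordinal with α ≥ ω. Player II has a winning strategy in the game G₁^α(𝒪_𝔅, 𝒪_𝔅) of length α played on X if and only if player II has a winning strategy in the game G₁^α(Ω_{0̄}, Ω_{0̄}) of length α played on C_𝔅(X). -/
open Set Topology

universe u

/-- A bornology on `X`: a collection of subsets covering `X`, closed under
taking subsets and under finite unions. -/
structure IsBornology {X : Type*} (𝔅 : Set (Set X)) : Prop where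
  covers : ⋃₀ 𝔅 = Set.univ
  empty_mem : ∅ ∈ 𝔅
  subset_mem : ∀ ⦃A B : Set X⦄, B ∈ 𝔅 → A ⊆ B → A ∈ 𝔅
  union_mem : ∀ ⦃A B : Set X⦄, A ∈ 𝔅 → B ∈ 𝔅 → A ∪ B ∈ 𝔅

/-- `𝔅` has a compact base: every member of `𝔅` is contained in a compact member of `𝔅`. -/
def HasCompactBase {X : Type*} [TopologicalSpace X] (𝔅 : Set (Set X)) : Prop :=
  ∀ B ∈ 𝔅, ∃ K ∈ 𝔅, IsCompact K ∧ B ⊆ K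

/-- The set of continuous real-valued functions on `X` (as a bare type, to be
topologized by a bornology). -/
def CFn (X : Type u) [TopologicalSpace X] : Type u := {f : X → ℝ // Continuous f}

/-- The zero function as an element of `CFn X`. -/
def zeroFn (X : Type u) [TopologicalSpace X] : CFn X := ⟨fun _ => 0, continuous_const⟩

/-- The basic "ball" `⟨B, ε⟩[f] = {g : ∀ x ∈ B, |f x − g x| < ε}`. -/
def unifBall {X : Type u} [TopologicalSpace X] (f : CFn X) (B : Set X) (ε : ℝ) :
    Set (CFn X) :=
  {g | ∀ x ∈ B, |f.1 x - g.1 x| < ε}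

/-- The topology of uniform convergence on members of a bornology `𝔅`:
a set is open iff around each of its points it contains a basic ball
`⟨B, ε⟩[f]` with `B ∈ 𝔅`, `ε > 0`.  This makes `CFn X` into `C_𝔅(X)`. -/
def bornTopology {X : Type u} [TopologicalSpace X] (𝔅 : Set (Set X))
    (hB : IsBornology 𝔅) : TopologicalSpace (CFn X) where
  IsOpen U := ∀ f ∈ U, ∃ B ∈ 𝔅, ∃ ε > (0 : ℝ), unifBall f B ε ⊆ U
  isOpen_univ := fun f _ => ⟨∅, hB.empty_mem, 1, one_pos, fun _ _ => trivial⟩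
  isOpen_inter := by
    intro U V hU hV f hf
    obtain ⟨B₁, hB₁, ε₁, hε₁, h₁⟩ := hU f hf.1
    obtain ⟨B₂, hB₂, ε₂, hε₂, h₂⟩ := hV f hf.2
    refine ⟨B₁ ∪ B₂, hB.union_mem hB₁ hB₂, min ε₁ ε₂, lt_min hε₁ hε₂, fun g hg => ⟨?_, ?_⟩⟩
    · exact h₁ fun x hx => lt_of_lt_of_le (hg x (Or.inl hx)) (min_le_left _ _)
    · exact h₂ fun x hx => lt_of_lt_of_le (hg x (Or.inr hx)) (min_le_right _ _)
  isOpen_sUnion := by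
    intro S hS f hf
    obtain ⟨U, hU, hfU⟩ := hf
    obtain ⟨B, hB', ε, hε, h⟩ := hS U hU f hfU
    exact ⟨B, hB', ε, hε, h.trans (Set.subset_sUnion_of_mem hU)⟩

/-- `Ω_z`: the family of all subsets of `Z ∖ {z}` having `z` in their closure. -/
def OmegaAt {Z : Type*} [TopologicalSpace Z] (z : Z) : Set (Set Z) :=
  {A | A ⊆ {z}ᶜ ∧ z ∈ closure A}

/-- `𝒢` is a `𝔅`-cover of `X`: every member of `𝔅` is contained in a member of `𝒢`. -/
def IsBCover {X : Type*} (𝔅 : Set (Set X)) (𝒢 : Set (Set X)) : Prop :=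
  ∀ B ∈ 𝔅, ∃ G ∈ 𝒢, B ⊆ G

/-- `𝒪_𝔅`: the family of all open `𝔅`-covers of `X`. -/
def OpenBCovers {X : Type*} [TopologicalSpace X] (𝔅 : Set (Set X)) : Set (Set (Set X)) :=
  {𝒰 | (∀ U ∈ 𝒰, IsOpen U) ∧ IsBCover 𝔅 𝒰}

/-- `𝒢` is a K-cover of `X`: every compact subset of `X` is contained in a member of `𝒢`. -/
def IsKCover {X : Type*} [TopologicalSpace X] (𝒢 : Set (Set X)) : Prop :=
  ∀ K : Set X, IsCompact K → ∃ G ∈ 𝒢, K ⊆ G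

/-- `𝒦`: the family of all open K-covers of `X`. -/
def KCovers (X : Type*) [TopologicalSpace X] : Set (Set (Set X)) :=
  {𝒰 | (∀ U ∈ 𝒰, IsOpen U) ∧ IsKCover 𝒰}

/-- Player II has a winning strategy in the game `G₁(𝒜, 𝒞)` (of length `ω`):
a function assigning to each finite sequence `(A₀, …, Aₙ)` of moves of player I an
element of `Aₙ`, such that in any play following it the chosen points form a member of `𝒞`. -/
def G1WinII {T : Type*} (𝒜 𝒞 : Set (Set T)) : Prop :=
  ∃ σ : (n : ℕ) → (Fin (n + 1) → Set T) → T,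
    (∀ (n : ℕ) (h : Fin (n + 1) → Set T), (∀ i, h i ∈ 𝒜) → σ n h ∈ h (Fin.last n)) ∧
    ∀ A : ℕ → Set T, (∀ n, A n ∈ 𝒜) →
      (Set.range fun n => σ n fun i => A i.1) ∈ 𝒞

/-- Player II has a winning strategy in the transfinite game `G₁^α(𝒜, 𝒞)` of length `α`. -/
def G1WinIIOrd {T : Type*} (α : Ordinal.{0}) (𝒜 𝒞 : Set (Set T)) : Prop :=
  ∃ σ : (γ : {γ : Ordinal.{0} // γ < α}) → ({δ : Ordinal.{0} // δ ≤ γ.1} → Set T) → T,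
    (∀ (γ : {γ : Ordinal.{0} // γ < α}) (h : {δ : Ordinal.{0} // δ ≤ γ.1} → Set T),
      (∀ δ, h δ ∈ 𝒜) → σ γ h ∈ h ⟨γ.1, le_rfl⟩) ∧
    ∀ A : {γ : Ordinal.{0} // γ < α} → Set T, (∀ γ, A γ ∈ 𝒜) →
      (Set.range fun γ : {γ : Ordinal.{0} // γ < α} =>
        σ γ fun δ => A ⟨δ.1, lt_of_le_of_lt δ.2 γ.2⟩) ∈ 𝒞

/-- The selection principle `S₁(𝒜, 𝒞)`. -/
def S1 {T : Type*} (𝒜 𝒞 : Set (Set T)) : Prop :=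
  ∀ A : ℕ → Set T, (∀ n, A n ∈ 𝒜) →
    ∃ a : ℕ → T, (∀ n, a n ∈ A n) ∧ Set.range a ∈ 𝒞

/-- `Z` has countable tightness. -/
def CountablyTight (Z : Type*) [TopologicalSpace Z] : Prop :=
  ∀ (z : Z) (A : Set Z), z ∈ closure A → ∃ B ⊆ A, B.Countable ∧ z ∈ closure B

/-- `Z` is productively countably tight: `Z × Y` has countable tightness
for every countably tight space `Y`. -/
def ProductivelyCountablyTight (Z : Type u) [TopologicalSpace Z] : Prop :=
  ∀ (Y : Type u) [TopologicalSpace Y], CountablyTight Y → CountablyTight (Z × Y)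

/-- `Z` has tightness at most `κ`. -/
def TightnessLE (Z : Type u) [TopologicalSpace Z] (κ : Cardinal.{u}) : Prop :=
  ∀ (z : Z) (A : Set Z), z ∈ closure A → ∃ B ⊆ A, Cardinal.mk B ≤ κ ∧ z ∈ closure B

/-- `κ ∈ Sp(Z)`: for every space `Y` of tightness at most `κ`, the product `Z × Y`
has tightness at most `κ`. -/
def MemSp (Z : Type u) [TopologicalSpace Z] (κ : Cardinal.{u}) : Prop :=
  ∀ (Y : Type u) [TopologicalSpace Y], TightnessLE Y κ → TightnessLE (Z × Y) κ

/-- `G` is a `G_κ`-set: an intersection of at most `κ` open sets. -/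
def IsGKappaSet {X : Type u} [TopologicalSpace X] (κ : Cardinal.{u}) (G : Set X) : Prop :=
  ∃ 𝒪 : Set (Set X), (∀ O ∈ 𝒪, IsOpen O) ∧ Cardinal.mk 𝒪 ≤ κ ∧ G = ⋂₀ 𝒪

/-- `G` is a `G_δ`-set: an intersection of countably many open sets. -/
def IsGDeltaSet {X : Type*} [TopologicalSpace X] (G : Set X) : Prop :=
  ∃ 𝒪 : Set (Set X), (∀ O ∈ 𝒪, IsOpen O) ∧ 𝒪.Countable ∧ G = ⋂₀ 𝒪

/-- A family `ℙ` of collections of subsets of `Z` is `κ`-singular at `z`. -/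
def KappaSingularAt {Z : Type u} [TopologicalSpace Z] (κ : Cardinal.{u})
    (ℙ : Set (Set (Set Z))) (z : Z) : Prop :=
  (∀ ξ ∈ ℙ, ∀ A ∈ ξ, Cardinal.mk A ≤ κ) ∧
  (∀ ξ ∈ ℙ, ∀ F : Finset (Set Z), ↑F ⊆ ξ → (⋂₀ (F : Set (Set Z))).Nonempty) ∧
  (∀ O : Set Z, IsOpen O → z ∈ O → ∃ ξ ∈ ℙ, ∃ A ∈ ξ, A ⊆ O) ∧
  (∀ ℰ ⊆ ℙ, Cardinal.mk ℰ ≤ κ → ∃ c : Set (Set Z) → Set Z,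
    (∀ ξ ∈ ℰ, c ξ ∈ ξ) ∧ z ∉ closure (⋃ ξ ∈ ℰ, c ξ))

/-- `X` is an Alster space. -/
def Alster (X : Type*) [TopologicalSpace X] : Prop :=
  ∀ 𝒢 : Set (Set X), (∀ G ∈ 𝒢, IsGDeltaSet G) → IsKCover 𝒢 →
    ∃ 𝒢' ⊆ 𝒢, 𝒢'.Countable ∧ ⋃₀ 𝒢' = Set.univ

/-- `X` is strongly Alster. -/
def StronglyAlster (X : Type*) [TopologicalSpace X] : Prop :=
  ∀ 𝒢 : Set (Set X), (∀ G ∈ 𝒢, IsGDeltaSet G) → IsKCover 𝒢 →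
    ∃ 𝒢' ⊆ 𝒢, 𝒢'.Countable ∧ IsKCover 𝒢'

/-- `X` is productively Lindelöf. -/
def ProductivelyLindelof (X : Type u) [TopologicalSpace X] : Prop :=
  ∀ (Y : Type u) [TopologicalSpace Y], LindelofSpace Y → LindelofSpace (X × Y)

/-- `X` is hemicompact. -/
def Hemicompact (X : Type*) [TopologicalSpace X] : Prop :=
  ∃ K : ℕ → Set X, (∀ n, IsCompact (K n)) ∧ ∀ C : Set X, IsCompact C → ∃ n, C ⊆ K n

/-! II wins either game by translating each move of I into a move of the other game and pulling
back the reply of a winning strategy there.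

From covers to functions: fix `ε γ > 0` tending to `0` along the cofinite filter of innings, and
turn a set `A` clustering at `0̄` into the cover by proper open sets `V` on which some `f ∈ A`
satisfies `|f| < ε γ`. If proper sets form a `𝔅`-cover, each `B ∈ 𝔅` lies in infinitely many of
them (enlarge `B` by one point outside each of the finitely many sets to be avoided), hence in
one with `ε γ` as small as desired. This needs every `B ∈ 𝔅` to have a proper open superset; if
some `B` has none, then `|f| < ε γ` on `B` forces `|f| < ε γ` everywhere, and II wins by picking
such an `f` in each inning.

From functions to covers: turn an open cover `𝒰` into the set of nonzero functions equal to `1` off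
some `U ∈ 𝒰`; if such a function is smaller than `1` on `B`, then `B ⊆ U`. -/

open Filter

/-- The innings of a game of length `α`, indexing the plays in `G1WinIIOrd`. -/
abbrev Innings (α : Ordinal.{0}) : Type 1 := {γ : Ordinal.{0} // γ < α}

theorem infinite_innings {α : Ordinal.{0}} (hα : Ordinal.omega0 ≤ α) : Infinite (Innings α) := by
  change Infinite (Iio α)
  rw [Cardinal.infinite_iff, Cardinal.mk_Iio_ordinal]
  exact Cardinal.aleph0_le_lift.2 (Ordinal.aleph0_le_card.2 hα)

theorem countable_innings {α : Ordinal.{0}} (hα : α.card ≤ Cardinal.aleph0) :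
    Countable (Innings α) := by
  change Countable (Iio α)
  rw [← Cardinal.mk_le_aleph0_iff, Cardinal.mk_Iio_ordinal]
  exact Cardinal.lift_le_aleph0.2 hα

namespace G1WinIIOrd

variable {S T : Type*} [Nonempty S] {α : Ordinal.{0}} {𝒜 𝒞 : Set (Set T)} {𝒜' 𝒞' : Set (Set S)}

theorem of_forall_exists (P : Innings α → S → Prop) (hmove : ∀ γ, ∀ A ∈ 𝒜', ∃ s ∈ A, P γ s)
    (hrange : ∀ s : Innings α → S, (∀ γ, P γ (s γ)) → range s ∈ 𝒞') : G1WinIIOrd α 𝒜' 𝒞' :=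
  ⟨fun γ h => Classical.epsilon fun s => s ∈ h ⟨γ.1, le_rfl⟩ ∧ P γ s,
    fun γ _ hh => (Classical.epsilon_spec (hmove γ _ (hh _))).1,
    fun _ hA => hrange _ fun γ => (Classical.epsilon_spec (hmove γ _ (hA γ))).2⟩

/- Player II reads a move `A` as the move `{t | ∃ s ∈ A, R γ t s}` of the game II can win, and
answers the winning reply `t` by some `s ∈ A` with `R γ t s`. -/
theorem of_rel (R : Innings α → T → S → Prop)
    (hmove : ∀ γ, ∀ A ∈ 𝒜', {t | ∃ s ∈ A, R γ t s} ∈ 𝒜)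
    (hrange : ∀ (t : Innings α → T) (s : Innings α → S),
      (∀ γ, R γ (t γ) (s γ)) → range t ∈ 𝒞 → range s ∈ 𝒞') :
    G1WinIIOrd α 𝒜 𝒞 → G1WinIIOrd α 𝒜' 𝒞' := by
  rintro ⟨σ, hσ, hwin⟩
  let reply (γ : Innings α) (h : {δ : Ordinal.{0} // δ ≤ γ.1} → Set S) : T :=
    σ γ fun δ => {t | ∃ s ∈ h δ, R ⟨δ.1, δ.2.trans_lt γ.2⟩ t s}
  have exists_rel (γ : Innings α) (h : {δ : Ordinal.{0} // δ ≤ γ.1} → Set S) (hh : ∀ δ, h δ ∈ 𝒜') :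
      ∃ s ∈ h ⟨γ.1, le_rfl⟩, R γ (reply γ h) s :=
    hσ γ _ fun δ => hmove ⟨δ.1, δ.2.trans_lt γ.2⟩ _ (hh δ)
  refine ⟨fun γ h => Classical.epsilon fun s => s ∈ h ⟨γ.1, le_rfl⟩ ∧ R γ (reply γ h) s,
    fun γ h hh => (Classical.epsilon_spec (exists_rel γ h hh)).1, fun A hA => ?_⟩
  exact hrange _ _ (fun γ => (Classical.epsilon_spec (exists_rel γ _ fun _ => hA _)).2)
    (hwin (fun γ => {t | ∃ s ∈ A γ, R γ t s}) fun γ => hmove γ _ (hA γ))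

end G1WinIIOrd

theorem exists_pos_tendsto_cofinite_zero (ι : Type*) [Countable ι] :
    ∃ ε : ι → ℝ, (∀ i, 0 < ε i) ∧ Tendsto ε cofinite (𝓝 0) := by
  have := Encodable.ofCountable ι
  obtain ⟨ε, hpos, _, hsum, -⟩ := posSumOfEncodable one_pos ι
  exact ⟨ε, hpos, hsum.summable.tendsto_cofinite_zero⟩

theorem exists_continuous_zero_one_of_isCompact_of_isClosed {X : Type*} [TopologicalSpace X]
    [CompletelyRegularSpace X] {K F : Set X} (hK : IsCompact K) (hF : IsClosed F)
    (hKF : Disjoint K F) : ∃ f : X → ℝ, Continuous f ∧ EqOn f 0 K ∧ EqOn f 1 F := by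
  obtain ⟨W, hW, rfl⟩ := isInducing_stoneCechUnit.isClosed_iff.1 hF
  obtain ⟨f, hf0, hf1, -⟩ := exists_continuous_zero_one_of_isClosed
    (hK.image continuous_stoneCechUnit).isClosed hW (disjoint_image_left.2 hKF)
  exact ⟨f ∘ stoneCechUnit, f.continuous.comp continuous_stoneCechUnit,
    fun x hx => hf0 (mem_image_of_mem _ hx), fun _ hx => hf1 hx⟩

section Bornology

variable {X : Type*} {𝔅 : Set (Set X)}

theorem IsBornology.mem_of_finite (hB : IsBornology 𝔅) {F : Set X} (hF : F.Finite) : F ∈ 𝔅 := by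
  induction F, hF using Set.Finite.induction_on with
  | empty => exact hB.empty_mem
  | @insert x _ _ _ ih =>
    obtain ⟨B, hB𝔅, hxB⟩ : x ∈ ⋃₀ 𝔅 := hB.covers ▸ mem_univ x
    exact hB.union_mem (hB.subset_mem hB𝔅 (singleton_subset_iff.2 hxB)) ih

theorem IsBCover.frequently_subset (hB : IsBornology 𝔅) {ι : Type*} {V : ι → Set X}
    (hcover : IsBCover 𝔅 (range V)) (hV : ∀ i, V i ≠ univ) {B : Set X} (hB𝔅 : B ∈ 𝔅) :
    ∃ᶠ i in cofinite, B ⊆ V i := by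
  choose p hp using fun i => (ne_univ_iff_exists_notMem _).1 (hV i)
  rw [frequently_cofinite_iff_infinite]
  intro hfin
  obtain ⟨_, ⟨i, rfl⟩, hi⟩ := hcover _ (hB.union_mem hB𝔅 (hB.mem_of_finite (hfin.image p)))
  obtain ⟨hBi, hpi⟩ := union_subset_iff.1 hi
  exact hp i (hpi (mem_image_of_mem p hBi))

end Bornology

section FunctionSpace

variable {X : Type u} [TopologicalSpace X] {𝔅 : Set (Set X)}

instance : Nonempty (CFn X) := ⟨zeroFn X⟩

theorem unifBall_half_subset {f g : CFn X} {B : Set X} {ε : ℝ} (hg : g ∈ unifBall f B (ε / 2)) :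
    unifBall g B (ε / 2) ⊆ unifBall f B ε := fun k hk x hx =>
  calc |f.1 x - k.1 x| ≤ |f.1 x - g.1 x| + |g.1 x - k.1 x| := abs_sub_le _ _ _
    _ < ε / 2 + ε / 2 := add_lt_add (hg x hx) (hk x hx)
    _ = ε := add_halves ε

theorem unifBall_mem_nhds (hB : IsBornology 𝔅) (f : CFn X) {B : Set X} (hB𝔅 : B ∈ 𝔅) {ε : ℝ}
    (hε : 0 < ε) : unifBall f B ε ∈ @nhds _ (bornTopology 𝔅 hB) f := by
  let := bornTopology 𝔅 hB
  have self_mem (g : CFn X) {δ : ℝ} (hδ : 0 < δ) : g ∈ unifBall g B δ := fun x _ => by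
    rwa [sub_self, abs_zero]
  refine mem_nhds_iff.2 ⟨{g | ∃ δ > 0, unifBall g B δ ⊆ unifBall f B ε},
    fun g ⟨δ, hδ, hg⟩ => hg (self_mem g hδ), ?_, ε, hε, Subset.rfl⟩
  rintro g ⟨δ, hδ, hg⟩
  exact ⟨B, hB𝔅, δ / 2, half_pos hδ,
    fun k hk => ⟨δ / 2, half_pos hδ, (unifBall_half_subset hk).trans hg⟩⟩

theorem mem_closure_iff_unifBall (hB : IsBornology 𝔅) {f : CFn X} {A : Set (CFn X)} :
    f ∈ @closure _ (bornTopology 𝔅 hB) A ↔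
      ∀ B ∈ 𝔅, ∀ ε > 0, ∃ g ∈ A, g ∈ unifBall f B ε := by
  let := bornTopology 𝔅 hB
  refine ⟨fun h B hB𝔅 ε hε => ?_, fun h => mem_closure_iff.2 fun U hU hfU => ?_⟩
  · obtain ⟨g, hg, hgA⟩ := mem_closure_iff_nhds.1 h _ (unifBall_mem_nhds hB f hB𝔅 hε)
    exact ⟨g, hgA, hg⟩
  · obtain ⟨B, hB𝔅, ε, hε, hBU⟩ := hU f hfU
    obtain ⟨g, hgA, hg⟩ := h B hB𝔅 ε hε
    exact ⟨g, hBU hg, hgA⟩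

/-- The family `Ω_{0̄}` of the space `C_𝔅(X)`. -/
abbrev OmegaZero (hB : IsBornology 𝔅) : Set (Set (CFn X)) :=
  @OmegaAt (CFn X) (bornTopology 𝔅 hB) (zeroFn X)

theorem mem_omegaZero_iff (hB : IsBornology 𝔅) {A : Set (CFn X)} :
    A ∈ OmegaZero hB ↔
      (∀ f ∈ A, f ≠ zeroFn X) ∧ ∀ B ∈ 𝔅, ∀ ε > 0, ∃ f ∈ A, ∀ x ∈ B, |f.1 x| < ε := by
  refine and_congr Iff.rfl ((mem_closure_iff_unifBall hB).trans ?_)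
  simp only [unifBall, zeroFn, zero_sub, abs_neg, mem_ofPred_eq]

theorem range_mem_omegaZero (hB : IsBornology 𝔅) {ι : Type*} {l : Filter ι} {ε : ι → ℝ}
    (hε : Tendsto ε l (𝓝 0)) {f : ι → CFn X} (hf : ∀ i, f i ≠ zeroFn X)
    (hsmall : ∀ B ∈ 𝔅, ∃ᶠ i in l, ∀ x ∈ B, |(f i).1 x| < ε i) : range f ∈ OmegaZero hB := by
  refine (mem_omegaZero_iff hB).2 ⟨forall_mem_range.2 hf, fun B hB𝔅 r hr => ?_⟩
  obtain ⟨i, hi, hir⟩ := ((hsmall B hB𝔅).and_eventually (hε.eventually_lt_const hr)).exists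
  exact ⟨f i, mem_range_self i, fun x hx => (hi x hx).trans hir⟩

theorem isOpen_abs_lt (f : CFn X) (r : ℝ) : IsOpen {x | |f.1 x| < r} :=
  isOpen_lt f.2.abs continuous_const

theorem exists_ne_zeroFn_lt_eq_one [CompletelyRegularSpace X] [Nonempty X] {K U : Set X}
    (hK : IsCompact K) (hU : IsOpen U) (hKU : K ⊆ U) {r : ℝ} (hr : 0 < r) :
    ∃ f : CFn X, f ≠ zeroFn X ∧ (∀ x ∈ K, |f.1 x| < r) ∧ ∀ x ∉ U, f.1 x = 1 := by
  obtain ⟨g, hg, hg0, hg1⟩ := exists_continuous_zero_one_of_isCompact_of_isClosed hK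
    hU.isClosed_compl (disjoint_compl_right_iff_subset.2 hKU)
  obtain ⟨δ, hδ, hδlt⟩ := exists_between (lt_min hr one_pos)
  obtain ⟨hδr, hδ1⟩ := lt_min_iff.1 hδlt
  refine ⟨⟨fun x => max (g x) δ, hg.max continuous_const⟩, fun hzero => ?_, fun x hx => ?_,
    fun x hx => ?_⟩
  · obtain ⟨x⟩ := ‹Nonempty X›
    exact (lt_max_of_lt_right hδ).ne' (congrFun (congrArg Subtype.val hzero) x)
  · change |max (g x) δ| < r
    rwa [hg0 hx, Pi.zero_apply, max_eq_right hδ.le, abs_of_pos hδ]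
  · change max (g x) δ = 1
    rw [hg1 hx, Pi.one_apply, max_eq_left hδ1.le]

end FunctionSpace

section Games

variable {X : Type u} [TopologicalSpace X] {𝔅 : Set (Set X)} {α : Ordinal.{0}}

theorem g1WinIIOrd_omegaZero_of_forall_isOpen_eq_univ (hB : IsBornology 𝔅) [Infinite (Innings α)]
    [Countable (Innings α)] {B₀ : Set X} (hB₀ : B₀ ∈ 𝔅)
    (huniv : ∀ U, IsOpen U → B₀ ⊆ U → U = univ) :
    G1WinIIOrd α (OmegaZero hB) (OmegaZero hB) := by
  obtain ⟨ε, hpos, hε⟩ := exists_pos_tendsto_cofinite_zero (Innings α)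
  refine G1WinIIOrd.of_forall_exists (fun γ f => f ≠ zeroFn X ∧ ∀ x, |f.1 x| < ε γ) ?_ ?_
  · intro γ A hA
    obtain ⟨hA0, hsmall⟩ := (mem_omegaZero_iff hB).1 hA
    obtain ⟨f, hfA, hf⟩ := hsmall B₀ hB₀ (ε γ) (hpos γ)
    exact ⟨f, hfA, hA0 f hfA, eq_univ_iff_forall.1 (huniv _ (isOpen_abs_lt f _) hf)⟩
  · intro f hf
    exact range_mem_omegaZero hB hε (fun γ => (hf γ).1)
      fun B _ => (Eventually.of_forall fun γ x _ => (hf γ).2 x).frequently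

theorem g1WinIIOrd_omegaZero_of_openBCovers_of_exists_isOpen_ne_univ (hB : IsBornology 𝔅)
    [Countable (Innings α)] (hproper : ∀ B ∈ 𝔅, ∃ U, IsOpen U ∧ B ⊆ U ∧ U ≠ univ) :
    G1WinIIOrd α (OpenBCovers 𝔅) (OpenBCovers 𝔅) →
      G1WinIIOrd α (OmegaZero hB) (OmegaZero hB) := by
  obtain ⟨ε, hpos, hε⟩ := exists_pos_tendsto_cofinite_zero (Innings α)
  refine G1WinIIOrd.of_rel
    (fun γ V f => (IsOpen V ∧ V ≠ univ) ∧ f ≠ zeroFn X ∧ ∀ x ∈ V, |f.1 x| < ε γ) ?_ ?_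
  · intro γ A hA
    obtain ⟨hA0, hsmall⟩ := (mem_omegaZero_iff hB).1 hA
    refine ⟨fun V ⟨_, _, hV, _⟩ => hV.1, fun B hB𝔅 => ?_⟩
    obtain ⟨f, hfA, hf⟩ := hsmall B hB𝔅 (ε γ) (hpos γ)
    obtain ⟨U, hU, hBU, hUne⟩ := hproper B hB𝔅
    have hne : {x | |f.1 x| < ε γ} ∩ U ≠ univ := fun h =>
      hUne (univ_subset_iff.1 (h ▸ inter_subset_right))
    exact ⟨{x | |f.1 x| < ε γ} ∩ U,
      ⟨f, hfA, ⟨(isOpen_abs_lt f _).inter hU, hne⟩, hA0 f hfA, fun x hx => hx.1⟩,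
      subset_inter hf hBU⟩
  · intro V f hVf hcover
    refine range_mem_omegaZero hB hε (fun γ => (hVf γ).2.1) fun B hB𝔅 => ?_
    exact (hcover.2.frequently_subset hB (fun γ => (hVf γ).1.2) hB𝔅).mono
      fun γ hBV x hx => (hVf γ).2.2 x (hBV hx)

theorem g1WinIIOrd_omegaZero_of_openBCovers (hB : IsBornology 𝔅) [Infinite (Innings α)]
    [Countable (Innings α)] (h : G1WinIIOrd α (OpenBCovers 𝔅) (OpenBCovers 𝔅)) :
    G1WinIIOrd α (OmegaZero hB) (OmegaZero hB) := by
  by_cases hproper : ∀ B ∈ 𝔅, ∃ U, IsOpen U ∧ B ⊆ U ∧ U ≠ univ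
  · exact g1WinIIOrd_omegaZero_of_openBCovers_of_exists_isOpen_ne_univ hB hproper h
  · push Not at hproper
    obtain ⟨B₀, hB₀, huniv⟩ := hproper
    exact g1WinIIOrd_omegaZero_of_forall_isOpen_eq_univ hB hB₀ huniv

theorem g1WinIIOrd_openBCovers_of_isEmpty [IsEmpty X] [Nonempty (Innings α)]
    (hempty : ∅ ∈ 𝔅) : G1WinIIOrd α (OpenBCovers 𝔅) (OpenBCovers 𝔅) := by
  refine G1WinIIOrd.of_forall_exists (fun _ _ => True) ?_ ?_
  · intro _ 𝒰 h𝒰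
    obtain ⟨U, hU, -⟩ := h𝒰.2 ∅ hempty
    exact ⟨U, hU, trivial⟩
  · intro U _
    refine ⟨fun V _ => ?_, fun B _ => ?_⟩
    · exact isOpen_discrete V
    · exact ⟨_, mem_range_self (Classical.arbitrary _), fun x => isEmptyElim x⟩

theorem g1WinIIOrd_openBCovers_of_omegaZero [CompletelyRegularSpace X] [Nonempty X]
    (hB : IsBornology 𝔅) (hcb : HasCompactBase 𝔅) :
    G1WinIIOrd α (OmegaZero hB) (OmegaZero hB) →
      G1WinIIOrd α (OpenBCovers 𝔅) (OpenBCovers 𝔅) := by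
  refine G1WinIIOrd.of_rel (fun _ f U => f ≠ zeroFn X ∧ IsOpen U ∧ ∀ x ∉ U, f.1 x = 1) ?_ ?_
  · intro _ 𝒰 h𝒰
    refine (mem_omegaZero_iff hB).2 ⟨fun f ⟨_, _, hf, _⟩ => hf, fun B hB𝔅 r hr => ?_⟩
    obtain ⟨K, hK𝔅, hK, hBK⟩ := hcb B hB𝔅
    obtain ⟨U, hU𝒰, hKU⟩ := h𝒰.2 K hK𝔅
    have hU := h𝒰.1 U hU𝒰
    obtain ⟨f, hf0, hfK, hf1⟩ := exists_ne_zeroFn_lt_eq_one hK hU hKU hr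
    exact ⟨f, ⟨U, hU𝒰, hf0, hU, hf1⟩, fun x hx => hfK x (hBK hx)⟩
  · intro f U hfU hf
    refine ⟨forall_mem_range.2 fun γ => (hfU γ).2.1, fun B hB𝔅 => ?_⟩
    obtain ⟨_, ⟨γ, rfl⟩, hγ⟩ := ((mem_omegaZero_iff hB).1 hf).2 B hB𝔅 1 one_pos
    refine ⟨U γ, mem_range_self γ, fun x hx => by_contra fun hxU => (hγ x hx).ne ?_⟩
    rw [(hfU γ).2.2 x hxU, abs_one]

end Games

theorem stmt3_general {X : Type u} [TopologicalSpace X] [CompletelyRegularSpace X]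
    (𝔅 : Set (Set X)) (hB : IsBornology 𝔅) (hcb : HasCompactBase 𝔅)
    (α : Ordinal.{0}) (hα : Ordinal.omega0 ≤ α) (hαc : α.card ≤ Cardinal.aleph0) :
    G1WinIIOrd α (OpenBCovers 𝔅) (OpenBCovers 𝔅) ↔
      G1WinIIOrd α (OmegaZero hB) (OmegaZero hB) := by
  have := infinite_innings hα
  have := countable_innings hαc
  refine ⟨g1WinIIOrd_omegaZero_of_openBCovers hB, fun h => ?_⟩
  rcases isEmpty_or_nonempty X
  · exact g1WinIIOrd_openBCovers_of_isEmpty hB.empty_mem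
  · exact g1WinIIOrd_openBCovers_of_omegaZero hB hcb h

/-- For a countable ordinal `α ≥ ω`, player II has a winning strategy in
`G₁^α(𝒪_𝔅, 𝒪_𝔅)` on `X` iff player II has a winning strategy in
`G₁^α(Ω_{0̄}, Ω_{0̄})` on `C_𝔅(X)`. -/
theorem stmt3 {X : Type u} [TopologicalSpace X] [T35Space X]
    (𝔅 : Set (Set X)) (hB : IsBornology 𝔅) (hcb : HasCompactBase 𝔅)
    (α : Ordinal.{0}) (hα : Ordinal.omega0 ≤ α) (hαc : α.card ≤ Cardinal.aleph0) :
    G1WinIIOrd α (OpenBCovers 𝔅) (OpenBCovers 𝔅) ↔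
      G1WinIIOrd α (@OmegaAt (CFn X) (bornTopology 𝔅 hB) (zeroFn X))
        (@OmegaAt (CFn X) (bornTopology 𝔅 hB) (zeroFn X)) :=
  stmt3_general 𝔅 hB hcb α hα hαc
end

section
/- Let X be a Tychonoff topological space. Player II has a winning strategy in the game G₁(𝒦, 𝒦) played on X if and only if player II has a winning strategy in the game G₁(Ω_{0̄}, Ω_{0̄}) played on C_k(X). -/
open Set Topology

universe u

/-!
Write `U_ε(f) = {x | |f x| < ε}`. The zero function is in the closure of `A` exactly when, for every
`ε > 0`, the sets `U_ε(f)` with `f ∈ A` form a K-cover. So Player II, when offered `A ∈ Ω_0̄`, can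
consult a strategy for K-covers on `{U_ε(f) | f ∈ A}`; a single run takes care of one `ε` only, and
interleaving countably many runs along the pairing function `ℕ × ℕ ≃ ℕ` takes care of all of them.
Conversely, when offered an open K-cover, Player II consults a strategy for `Ω_0̄` on the nonzero
functions `f` such that `U_1(f)` is contained in a member of the cover; complete regularity supplies
enough of them, and precision `ε = 1` already suffices to win.
-/

section Games

variable {S T : Type*}

theorem G1WinII.mono {𝒜 𝒞 𝒟 : Set (Set T)} (h : G1WinII 𝒜 𝒞) (h𝒞𝒟 : 𝒞 ⊆ 𝒟) : G1WinII 𝒜 𝒟 :=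
  let ⟨σ, hσ, hwin⟩ := h
  ⟨σ, hσ, fun A hA => h𝒞𝒟 (hwin A hA)⟩

theorem G1WinII.of_rel [Nonempty T] {𝒜 𝒞 : Set (Set S)} {ℬ 𝒟 : Set (Set T)}
    (h : G1WinII 𝒜 𝒞) (R : S → T → Prop) (hℬ : ∀ B ∈ ℬ, {s | ∃ t ∈ B, R s t} ∈ 𝒜)
    (h𝒟 : ∀ (s : ℕ → S) (t : ℕ → T), (∀ n, R (s n) (t n)) → range s ∈ 𝒞 → range t ∈ 𝒟) :
    G1WinII ℬ 𝒟 := by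
  obtain ⟨σ, hσ, hwin⟩ := h
  let Φ : Set T → Set S := fun B => {s | ∃ t ∈ B, R s t}
  let pick : Set T → S → T := fun B s => Classical.epsilon fun t => t ∈ B ∧ R s t
  have pick_spec {B : Set T} {s : S} (hs : s ∈ Φ B) : pick B s ∈ B ∧ R s (pick B s) :=
    Classical.epsilon_spec hs
  have reply_mem (n : ℕ) (H : Fin (n + 1) → Set T) (hH : ∀ i, H i ∈ ℬ) :
      σ n (fun i => Φ (H i)) ∈ Φ (H (Fin.last n)) :=
    hσ n _ fun i => hℬ _ (hH i)
  refine ⟨fun n H => pick (H (Fin.last n)) (σ n fun i => Φ (H i)),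
    fun n H hH => (pick_spec (reply_mem n H hH)).1, fun B hB => ?_⟩
  exact h𝒟 (fun n => σ n fun i => Φ (B i)) _
    (fun n => (pick_spec (reply_mem n (fun i => B i) fun i => hB i)).2)
    (hwin (fun n => Φ (B n)) fun n => hℬ _ (hB n))

theorem G1WinII.of_iUnion {𝒜 𝒟 : Set (Set T)} {𝒞 : ℕ → Set (Set T)}
    (h : ∀ j, G1WinII 𝒜 (𝒞 j))
    (h𝒟 : ∀ C : ℕ → Set T, (∀ j, C j ∈ 𝒞 j) → ⋃ j, C j ∈ 𝒟) : G1WinII 𝒜 𝒟 := by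
  choose σ hσ hwin using h
  have pair_mono (j : ℕ) : Monotone (Nat.pair j) :=
    StrictMono.monotone fun _ _ => Nat.pair_lt_pair_right j
  have pair_lt (n : ℕ) (i : Fin (n.unpair.2 + 1)) : Nat.pair n.unpair.1 i < n + 1 :=
    Nat.lt_succ_of_le <| (pair_mono _ i.is_le).trans_eq (Nat.pair_unpair n)
  -- Inning `n = pair j k` is inning `k` of the `j`-th run.
  refine ⟨fun n H => σ n.unpair.1 n.unpair.2 fun i => H ⟨Nat.pair n.unpair.1 i, pair_lt n i⟩,
    fun n H hH => ?_, fun A hA => ?_⟩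
  · have hlast : (⟨_, pair_lt n (Fin.last _)⟩ : Fin (n + 1)) = Fin.last n :=
      Fin.ext (Nat.pair_unpair n)
    simpa only [hlast] using
      hσ n.unpair.1 n.unpair.2 (fun i => H ⟨_, pair_lt n i⟩) fun i => hH _
  · let reply : ℕ × ℕ → T := fun p => σ p.1 p.2 fun i => A (Nat.pair p.1 i)
    have range_reply : range (fun n : ℕ => reply n.unpair) = ⋃ j, range fun k => reply (j, k) := by
      rw [← Function.comp_def, Nat.surjective_unpair.range_comp]
      ext t
      simp only [mem_range, Prod.exists, mem_iUnion]
    exact range_reply ▸ h𝒟 _ fun j => hwin j (fun k => A (Nat.pair j k)) fun k => hA _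

end Games

section KCovers

variable {X : Type*} [TopologicalSpace X]

theorem IsKCover.of_refines {𝒰 𝒱 : Set (Set X)} (h𝒰 : IsKCover 𝒰)
    (h : ∀ U ∈ 𝒰, ∃ V ∈ 𝒱, U ⊆ V) : IsKCover 𝒱 := by
  intro K hK
  obtain ⟨U, hU, hKU⟩ := h𝒰 K hK
  obtain ⟨V, hV, hUV⟩ := h U hU
  exact ⟨V, hV, hKU.trans hUV⟩

theorem IsKCover.univ_mem [CompactSpace X] {𝒰 : Set (Set X)} (h𝒰 : IsKCover 𝒰) :
    univ ∈ 𝒰 := by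
  obtain ⟨U, hU, hXU⟩ := h𝒰 univ isCompact_univ
  exact eq_univ_of_univ_subset hXU ▸ hU

theorem g1WinII_kCovers_of_compactSpace [CompactSpace X] :
    G1WinII (KCovers X) (KCovers X) := by
  refine ⟨fun _ _ => univ, fun n H hH => (hH (Fin.last n)).2.univ_mem, fun _ _ => ?_⟩
  rw [range_const]
  exact ⟨fun U hU => hU ▸ isOpen_univ, fun K _ => ⟨univ, rfl, subset_univ K⟩⟩

end KCovers

section FunctionSpace

variable {X : Type*} [TopologicalSpace X]

theorem mem_closure_continuousMap_iff {Y : Type*} [PseudoMetricSpace Y]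
    {A : Set C(X, Y)} {f : C(X, Y)} :
    f ∈ closure A ↔
      ∀ ε > 0, ∀ K : Set X, IsCompact K → ∃ g ∈ A, ∀ x ∈ K, dist (f x) (g x) < ε := by
  rw [mem_closure_iff_nhds_basis (nhds_basis_uniformity'
    Metric.uniformity_basis_dist.compactConvergenceUniformity)]
  exact ⟨fun h ε hε K hK => h (K, ε) ⟨hK, hε⟩, fun h i hi => h i.2 hi.2 i.1 hi.1⟩

/-- The strict sublevel set `{x | |f x| < ε}`, through which functions near `0` on compact sets are
translated into members of K-covers. -/
def absSublevel (ε : ℝ) (f : C(X, ℝ)) : Set X := {x | |f x| < ε}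

theorem isOpen_absSublevel (ε : ℝ) (f : C(X, ℝ)) : IsOpen (absSublevel ε f) :=
  isOpen_lt (by fun_prop) continuous_const

theorem absSublevel_mono (f : C(X, ℝ)) {δ ε : ℝ} (h : δ ≤ ε) :
    absSublevel δ f ⊆ absSublevel ε f :=
  fun _ hx => lt_of_lt_of_le hx h

theorem zero_mem_closure_iff_isKCover {A : Set C(X, ℝ)} :
    0 ∈ closure A ↔ ∀ ε > 0, IsKCover (absSublevel ε '' A) := by
  simp only [mem_closure_continuousMap_iff, ContinuousMap.zero_apply, dist_zero_left,
    Real.norm_eq_abs, IsKCover, exists_mem_image]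
  rfl

variable (X) in
/-- The weakening of `Ω_0̄` to a single precision `ε`: families of nonzero functions which contain,
for every compact `K`, a function of absolute value less than `ε` on `K`. A run of a strategy for
K-covers produces such a family. -/
def OmegaWithin (ε : ℝ) : Set (Set C(X, ℝ)) :=
  {A | A ⊆ {0}ᶜ ∧ IsKCover (absSublevel ε '' A)}

theorem omegaAt_zero_subset_omegaWithin {ε : ℝ} (hε : 0 < ε) :
    OmegaAt (0 : C(X, ℝ)) ⊆ OmegaWithin X ε :=
  fun _ hA => ⟨hA.1, zero_mem_closure_iff_isKCover.1 hA.2 ε hε⟩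

theorem iUnion_mem_omegaAt_zero {ι : Type*} {ε : ι → ℝ} (hε : ∀ δ > 0, ∃ i, ε i < δ)
    {A : ι → Set C(X, ℝ)} (hA : ∀ i, A i ∈ OmegaWithin X (ε i)) :
    ⋃ i, A i ∈ OmegaAt (0 : C(X, ℝ)) := by
  refine ⟨iUnion_subset fun i => (hA i).1, zero_mem_closure_iff_isKCover.2 fun δ hδ => ?_⟩
  obtain ⟨i, hi⟩ := hε δ hδ
  refine (hA i).2.of_refines ?_
  rintro _ ⟨f, hf, rfl⟩
  exact ⟨_, mem_image_of_mem _ (mem_iUnion_of_mem i hf), absSublevel_mono f hi.le⟩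

theorem exists_continuous_zero_one_of_isCompact_of_isClosed_s4 [CompletelyRegularSpace X]
    {K C : Set X} (hK : IsCompact K) (hC : IsClosed C) (hKC : Disjoint K C) :
    ∃ f : C(X, ℝ), EqOn f 0 K ∧ EqOn f 1 C ∧ ∀ x, f x ∈ Icc (0 : ℝ) 1 := by
  obtain ⟨D, hD, rfl⟩ := isInducing_stoneCechUnit.isClosed_iff.1 hC
  obtain ⟨f, hf0, hf1, hf⟩ := exists_continuous_zero_one_of_isClosed
    (hK.image continuous_stoneCechUnit).isClosed hD (disjoint_image_left.2 hKC)
  exact ⟨f.comp ⟨stoneCechUnit, continuous_stoneCechUnit⟩,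
    fun x hx => hf0 (mem_image_of_mem _ hx), fun x hx => hf1 hx, fun x => hf _⟩

theorem exists_ne_zero_subset_absSublevel_subset [CompletelyRegularSpace X] [Nonempty X]
    {K U : Set X} (hK : IsCompact K) (hU : IsOpen U) (hKU : K ⊆ U) {ε : ℝ} (hε : 0 < ε) :
    ∃ f : C(X, ℝ), f ≠ 0 ∧ K ⊆ absSublevel ε f ∧ absSublevel 1 f ⊆ U := by
  obtain ⟨f, hfK, hfU, hf⟩ := exists_continuous_zero_one_of_isCompact_of_isClosed_s4 hK
    hU.isClosed_compl (disjoint_compl_right_iff_subset.2 hKU)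
  -- The shift by `ε / 2` makes the function nonzero even where `f` vanishes identically.
  let g : C(X, ℝ) := f + ContinuousMap.const X (ε / 2)
  have g_pos (x : X) : 0 < g x := add_pos_of_nonneg_of_pos (hf x).1 (half_pos hε)
  refine ⟨g, fun hg => ?_, fun x hx => ?_, fun x hx => ?_⟩
  · exact (g_pos (Classical.arbitrary X)).ne' (DFunLike.congr_fun hg _)
  · have hgx : g x = ε / 2 := by simp [g, hfK hx]
    simpa [absSublevel, hgx, abs_of_pos (half_pos hε)] using half_lt_self hε
  · by_contra hxU
    have hgx : g x = 1 + ε / 2 := by simp [g, hfU hxU]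
    have : g x < 1 := (le_abs_self _).trans_lt hx
    linarith

end FunctionSpace

section KCoversAndOmega

variable {X : Type*} [TopologicalSpace X]

theorem G1WinII.omegaWithin_of_kCovers (h : G1WinII (KCovers X) (KCovers X)) {ε : ℝ}
    (hε : 0 < ε) : G1WinII (OmegaAt (0 : C(X, ℝ))) (OmegaWithin X ε) := by
  refine h.of_rel (fun U f => f ≠ 0 ∧ absSublevel ε f = U) (fun A hA => ⟨?_, ?_⟩) ?_
  · rintro _ ⟨f, -, -, rfl⟩
    exact isOpen_absSublevel ε f
  · refine (omegaAt_zero_subset_omegaWithin hε hA).2.of_refines ?_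
    rintro _ ⟨f, hf, rfl⟩
    exact ⟨_, ⟨f, hf, hA.1 hf, rfl⟩, subset_rfl⟩
  · intro U f hUf hU
    obtain rfl : (fun n => absSublevel ε (f n)) = U := funext fun n => (hUf n).2
    refine ⟨range_subset_iff.2 fun n => (hUf n).1, ?_⟩
    rw [← range_comp]
    exact hU.2

theorem setOf_absSublevel_one_subset_mem_omegaAt_zero [CompletelyRegularSpace X] [Nonempty X]
    {𝒰 : Set (Set X)} (h𝒰 : 𝒰 ∈ KCovers X) :
    {f : C(X, ℝ) | ∃ U ∈ 𝒰, f ≠ 0 ∧ IsOpen U ∧ absSublevel 1 f ⊆ U} ∈ OmegaAt 0 := by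
  refine ⟨?_, zero_mem_closure_iff_isKCover.2 fun ε hε K hK => ?_⟩
  · rintro f ⟨U, -, hf, -⟩
    exact hf
  · obtain ⟨U, hU, hKU⟩ := h𝒰.2 K hK
    obtain ⟨f, hf, hKf, hfU⟩ :=
      exists_ne_zero_subset_absSublevel_subset hK (h𝒰.1 U hU) hKU hε
    exact ⟨_, mem_image_of_mem _ ⟨U, hU, hf, h𝒰.1 U hU, hfU⟩, hKf⟩

theorem G1WinII.kCovers_of_omegaWithin_one [CompletelyRegularSpace X]
    (h : G1WinII (OmegaAt (0 : C(X, ℝ))) (OmegaWithin X 1)) :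
    G1WinII (KCovers X) (KCovers X) := by
  -- For empty `X` there are no nonzero functions to consult the strategy on.
  rcases isEmpty_or_nonempty X with hX | hX
  · exact g1WinII_kCovers_of_compactSpace
  refine h.of_rel (fun f U => f ≠ 0 ∧ IsOpen U ∧ absSublevel 1 f ⊆ U)
    (fun 𝒰 h𝒰 => setOf_absSublevel_one_subset_mem_omegaAt_zero h𝒰) ?_
  intro f U hfU hf
  refine ⟨forall_mem_range.2 fun n => (hfU n).2.1, hf.2.of_refines ?_⟩
  rintro _ ⟨_, ⟨n, rfl⟩, rfl⟩
  exact ⟨U n, mem_range_self n, (hfU n).2.2⟩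

end KCoversAndOmega

theorem stmt4_general {X : Type*} [TopologicalSpace X] [CompletelyRegularSpace X] :
    G1WinII (KCovers X) (KCovers X) ↔
      G1WinII (OmegaAt (0 : C(X, ℝ))) (OmegaAt (0 : C(X, ℝ))) := by
  constructor
  · intro h
    have hrun (j : ℕ) : G1WinII (OmegaAt 0) (OmegaWithin X (1 / ((j : ℝ) + 1))) :=
      h.omegaWithin_of_kCovers Nat.one_div_pos_of_nat
    exact .of_iUnion hrun fun A hA => iUnion_mem_omegaAt_zero (fun _ => exists_nat_one_div_lt) hA
  · intro h
    exact (h.mono (omegaAt_zero_subset_omegaWithin one_pos)).kCovers_of_omegaWithin_one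

/-- Player II has a winning strategy in `G₁(𝒦, 𝒦)` on `X` iff
player II has a winning strategy in `G₁(Ω_{0̄}, Ω_{0̄})` on `C_k(X)`
(the compact-open topology on `C(X, ℝ)`). -/
theorem stmt4 {X : Type*} [TopologicalSpace X] [T35Space X] :
    G1WinII (KCovers X) (KCovers X) ↔
      G1WinII (OmegaAt (0 : C(X, ℝ))) (OmegaAt (0 : C(X, ℝ))) :=
  stmt4_general
end

section
/- Let X be a Tychonoff topological space, let 𝔅 be a bornology with compact base on X, and let κ be an infinite cardinal. Then κ ∈ Sp(C_𝔅(X)) if and only if every 𝔅-cover of X consisting of G_κ-sets has a 𝔅-subcover of cardinality at most κ. -/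
open Set Topology

universe u

/-!
Membership of `κ` in `Sp(Z)` is a property of cluster points in `Z` alone: whenever `z` is a cluster
point of a supremum of filters, each containing a set of size at most `κ`, it is a cluster point of
the supremum of at most `κ` of them. Necessity is seen by multiplying `Z` with the fan whose spines
carry the given filters; for sufficiency, a set `A ⊆ Z × Y` with `(z, y) ∈ closure A` yields one
filter for each neighbourhood of `z`, by the tightness of `Y`.

In `C_𝔅(X)`, a set `D` of at most `κ` functions lies in `⟨B, ε⟩[f]` iff `B` lies in the `G_κ`-set of
points where every `g ∈ D` is `ε`-close to `f`, so small subcovers by `G_κ`-sets give small families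
of filters. Conversely, complete separation turns a `G_κ`-set `G ⊇ K` into a filter of functions
that vanish on `K` and are eventually `1` at each point outside `G`.
-/

open Filter Cardinal

theorem mk_iUnion_le_of_aleph0_le {α : Type u} {ι : Type*} {κ : Cardinal.{u}} (hκ : ℵ₀ ≤ κ)
    (hι : lift.{u} #ι ≤ lift κ) {s : ι → Set α} (hs : ∀ i, #(s i) ≤ κ) : #(⋃ i, s i) ≤ κ := by
  rw [← Cardinal.lift_le]
  calc lift #(⋃ i, s i) ≤ lift #ι * ⨆ i, lift #(s i) := mk_iUnion_le_lift s
    _ ≤ lift κ * lift κ := mul_le_mul' hι (ciSup_le' fun i => Cardinal.lift_le.2 (hs i))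
    _ = lift κ := mul_eq_self (aleph0_le_lift.2 hκ)

theorem mk_finset_le_of_aleph0_le {α : Type u} {κ : Cardinal.{u}} (hκ : ℵ₀ ≤ κ) (hα : #α ≤ κ) :
    #(Finset α) ≤ κ := by
  cases finite_or_infinite α
  · exact (lt_aleph0_of_finite _).le.trans hκ
  · rwa [mk_finset_of_infinite]

theorem frequently_biSup {ι α : Type*} {J : Set ι} {l : ι → Filter α} {p : α → Prop} :
    (∃ᶠ x in ⨆ i ∈ J, l i, p x) ↔ ∃ i ∈ J, ∃ᶠ x in l i, p x := by
  simp [Filter.Frequently, Filter.Eventually, mem_iSup]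

theorem mem_closure_prod_iff {Z Y : Type*} [TopologicalSpace Z] [TopologicalSpace Y]
    {A : Set (Z × Y)} {z : Z} {y : Y} :
    (z, y) ∈ closure A ↔ ∀ W ∈ 𝓝 z, y ∈ closure (Prod.snd '' (A ∩ Prod.fst ⁻¹' W)) := by
  simp only [mem_closure_iff_nhds_basis' ((𝓝 z).basis_sets.prod_nhds (𝓝 y).basis_sets),
    mem_closure_iff_nhds, Prod.forall, id_eq, and_imp]
  refine forall_congr' fun W => ⟨fun h hW V hV => ?_, fun h V hW hV => ?_⟩
  · obtain ⟨p, ⟨hpW, hpV⟩, hpA⟩ := h V hW hV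
    exact ⟨p.2, hpV, p, ⟨hpA, hpW⟩, rfl⟩
  · obtain ⟨_, hpV, p, ⟨hpA, hpW⟩, rfl⟩ := h hW V hV
    exact ⟨p, ⟨hpW, hpV⟩, hpA⟩

theorem TightnessLE.exists_subset_mem_closure_image {α Y : Type u} [TopologicalSpace Y]
    {κ : Cardinal.{u}} (hY : TightnessLE Y κ) {f : α → Y} {A : Set α} {y : Y}
    (hy : y ∈ closure (f '' A)) : ∃ D ⊆ A, #D ≤ κ ∧ y ∈ closure (f '' D) := by
  obtain ⟨C, hCA, hCκ, hCy⟩ := hY y _ hy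
  obtain ⟨D, hD, hf⟩ := exists_subset_bijOn (A ∩ f ⁻¹' C) f
  rw [image_inter_preimage, inter_eq_right.2 hCA] at hf
  refine ⟨D, hD.trans inter_subset_left, ?_, hf.image_eq.symm ▸ hCy⟩
  rwa [← mk_image_eq_of_injOn f D hf.injOn, hf.image_eq]

/-- The fan over a family of filters on `Z`: disjoint discrete copies of `Z` (the spines) and one
further point (the apex), towards which the `i`-th spine converges along `l i`. It is the test
space `Y` that detects whether `κ ∈ Sp(Z)`. -/
inductive FilterFan {ι Z : Type u} (l : ι → Filter Z) : Type u
  | apex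
  | spine (i : ι) (x : Z)

namespace FilterFan

variable {ι Z : Type u} {l : ι → Filter Z}

instance : TopologicalSpace (FilterFan l) := nhdsAdjoint apex (⨆ i, map (spine i) (l i))

theorem nhds_apex : 𝓝 (apex : FilterFan l) = pure apex ⊔ ⨆ i, map (spine i) (l i) :=
  nhds_nhdsAdjoint_same _ _

theorem nhds_spine (i : ι) (x : Z) : 𝓝 (spine i x : FilterFan l) = pure (spine i x) :=
  nhds_nhdsAdjoint_of_ne _ nofun

theorem apex_mem_closure_iff {A : Set (FilterFan l)} :
    apex ∈ closure A ↔ apex ∈ A ∨ ∃ i, ∃ᶠ x in l i, spine i x ∈ A := by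
  simp only [mem_closure_iff_frequently, nhds_apex, frequently_sup, frequently_pure,
    frequently_iSup, frequently_map]

theorem tightnessLE {κ : Cardinal.{u}} (hκ : 1 ≤ κ) (hl : ∀ i, ∃ D ∈ l i, #D ≤ κ) :
    TightnessLE (FilterFan l) κ := by
  intro y A hy
  have of_mem (hyA : y ∈ A) : ∃ B ⊆ A, #B ≤ κ ∧ y ∈ closure B :=
    ⟨{y}, singleton_subset_iff.2 hyA, (mk_singleton y).trans_le hκ, subset_closure rfl⟩
  cases y with
  | spine i x => exact of_mem (by simpa [mem_closure_iff_frequently, nhds_spine] using hy)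
  | apex =>
    obtain hA | ⟨i, hi⟩ := apex_mem_closure_iff.1 hy
    · exact of_mem hA
    · obtain ⟨D, hD, hDκ⟩ := hl i
      refine ⟨A ∩ spine i '' D, inter_subset_left,
        (mk_le_mk_of_subset inter_subset_right).trans (mk_image_le.trans hDκ), ?_⟩
      exact apex_mem_closure_iff.2 <| .inr
        ⟨i, (hi.and_eventually hD).mono fun x hx => ⟨hx.1, x, hx.2, rfl⟩⟩

theorem mk_apex_mem_closure_image_iff [TopologicalSpace Z] {z : Z} {P : Set (ι × Z)} :
    (z, (apex : FilterFan l)) ∈ closure ((fun p => (p.2, spine p.1 p.2)) '' P) ↔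
      ∀ W ∈ 𝓝 z, ∃ i, ∃ᶠ x in l i, (i, x) ∈ P ∧ x ∈ W := by
  simp [mem_closure_prod_iff, apex_mem_closure_iff]

end FilterFan

section Sp

variable {Z : Type u} [TopologicalSpace Z] {κ : Cardinal.{u}}

theorem MemSp.exists_clusterPt_biSup (hZ : MemSp Z κ) (hκ : 1 ≤ κ) {ι : Type u} {l : ι → Filter Z}
    (hl : ∀ i, ∃ D ∈ l i, #D ≤ κ) {z : Z} (hz : ClusterPt z (⨆ i, l i)) :
    ∃ J : Set ι, #J ≤ κ ∧ ClusterPt z (⨆ i ∈ J, l i) := by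
  let φ : ι × Z → Z × FilterFan l := fun p => (p.2, .spine p.1 p.2)
  have φ_injective : φ.Injective := by rintro ⟨i, x⟩ ⟨j, x'⟩ h; simp_all [φ]
  have apex_mem : (z, FilterFan.apex) ∈ closure (range φ) := by
    rw [← image_univ]
    refine FilterFan.mk_apex_mem_closure_image_iff.2 fun W hW => ?_
    simpa [frequently_iSup] using clusterPt_iff_frequently.1 hz W hW
  obtain ⟨_, hφ, hPκ, hP⟩ := hZ _ (FilterFan.tightnessLE hκ hl) _ _ apex_mem
  obtain ⟨P, rfl⟩ := subset_range_iff_exists_image_eq.1 hφ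
  refine ⟨Prod.fst '' P, mk_image_le.trans ((mk_image_eq φ_injective).ge.trans hPκ), ?_⟩
  refine clusterPt_iff_frequently.2 fun W hW => ?_
  obtain ⟨i, hi⟩ := FilterFan.mk_apex_mem_closure_image_iff.1 hP W hW
  obtain ⟨x, hx, -⟩ := hi.exists
  exact frequently_biSup.2 ⟨i, ⟨_, hx, rfl⟩, hi.mono fun _ => And.right⟩

theorem memSp_of_forall_exists_clusterPt_biSup (hκ : ℵ₀ ≤ κ)
    (H : ∀ (z : Z) (ι : Type u) (l : ι → Filter Z), (∀ i, ∃ D ∈ l i, #D ≤ κ) →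
      ClusterPt z (⨆ i, l i) → ∃ J : Set ι, #J ≤ κ ∧ ClusterPt z (⨆ i ∈ J, l i)) :
    MemSp Z κ := by
  rintro Y _ hY ⟨z, y⟩ A hA
  have (W : {W // W ∈ 𝓝 z}) : ∃ D ⊆ A ∩ Prod.fst ⁻¹' W, #D ≤ κ ∧ y ∈ closure (Prod.snd '' D) :=
    hY.exists_subset_mem_closure_image (mem_closure_prod_iff.1 hA W W.2)
  choose D hDA hDκ hDy using this
  let l (W : {W // W ∈ 𝓝 z}) : Filter Z := map Prod.fst (comap Prod.snd (𝓝 y) ⊓ 𝓟 (D W))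
  have frequently_l {W} {p : Z → Prop} :
      (∃ᶠ x in l W, p x) ↔ y ∈ closure (Prod.snd '' {q ∈ D W | p q.1}) := by
    simp only [l, frequently_map, frequently_inf_principal, frequently_comap,
      mem_closure_iff_frequently, mem_image, mem_ofPred_eq, and_comm, and_left_comm]
  have clusterPt_l : ClusterPt z (⨆ W, l W) := by
    refine clusterPt_iff_frequently.2 fun W hW => frequently_iSup.2 ⟨⟨W, hW⟩, ?_⟩
    refine frequently_l.2 (closure_mono (image_mono ?_) (hDy ⟨W, hW⟩))
    exact fun q hq => ⟨hq, (hDA _ hq).2⟩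
  obtain ⟨J, hJκ, hJ⟩ := H z _ l (fun W => ⟨Prod.fst '' D W,
    image_mem_map (mem_inf_of_right (mem_principal_self _)), mk_image_le.trans (hDκ W)⟩) clusterPt_l
  refine ⟨⋃ W : J, D W, iUnion_subset fun W => (hDA W).trans inter_subset_left,
    mk_iUnion_le_of_aleph0_le hκ (Cardinal.lift_le.2 hJκ) fun W => hDκ W, ?_⟩
  refine mem_closure_prod_iff.2 fun V hV => ?_
  obtain ⟨W, hWJ, hW⟩ := frequently_biSup.1 (clusterPt_iff_frequently.1 hJ V hV)
  refine closure_mono (image_mono ?_) (frequently_l.1 hW)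
  exact fun q hq => ⟨mem_iUnion.2 ⟨⟨W, hWJ⟩, hq.1⟩, hq.2⟩

end Sp

section UniformConvergence

variable {X : Type u} [TopologicalSpace X] {𝔅 : Set (Set X)} {κ : Cardinal.{u}}

theorem hasBasis_nhds_bornTopology (hB : IsBornology 𝔅) (f : CFn X) :
    (@nhds _ (bornTopology 𝔅 hB) f).HasBasis (fun p : Set X × ℝ => p.1 ∈ 𝔅 ∧ 0 < p.2)
      fun p => unifBall f p.1 p.2 := by
  let _ := bornTopology 𝔅 hB
  refine ⟨fun U => ⟨fun hU => ?_, ?_⟩⟩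
  · obtain ⟨V, hVU, hV, hfV⟩ := mem_nhds_iff.1 hU
    obtain ⟨B, hB𝔅, ε, hε, hBV⟩ := hV f hfV
    exact ⟨(B, ε), ⟨hB𝔅, hε⟩, hBV.trans hVU⟩
  · rintro ⟨⟨B, ε⟩, ⟨hB𝔅, hε⟩, hBU⟩
    -- Since `B` need not be compact, the ball itself need not be open.
    let V : Set (CFn X) := {g | ∃ δ > 0, ∀ x ∈ B, |f.1 x - g.1 x| ≤ ε - δ}
    have hV : IsOpen V := by
      rintro g ⟨δ, hδ, hg⟩
      refine ⟨B, hB𝔅, δ / 2, half_pos hδ, fun h hh => ⟨δ / 2, half_pos hδ, fun x hx => ?_⟩⟩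
      linarith [abs_sub_le (f.1 x) (g.1 x) (h.1 x), hg x hx, hh x hx]
    refine mem_nhds_iff.2 ⟨V, ?_, hV, ε, hε, by simp⟩
    rintro g ⟨δ, hδ, hg⟩
    exact hBU fun x hx => (hg x hx).trans_lt (sub_lt_self ε hδ)

theorem clusterPt_bornTopology_iff (hB : IsBornology 𝔅) {f : CFn X} {l : Filter (CFn X)} :
    @ClusterPt _ (bornTopology 𝔅 hB) f l ↔
      ∀ B ∈ 𝔅, ∀ ε > 0, ∃ᶠ g in l, g ∈ unifBall f B ε := by
  let _ := bornTopology 𝔅 hB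
  simp only [(hasBasis_nhds_bornTopology hB f).clusterPt_iff_frequently, Prod.forall, and_imp]
  exact forall_congr' fun B => forall_comm

/-- The set of points at which every member of `D` is `ε`-close to `f`; as a set-valued function of
`D` it is the polar of `B ↦ unifBall f B ε`. -/
def unifPolar (f : CFn X) (D : Set (CFn X)) (ε : ℝ) : Set X :=
  {x | ∀ g ∈ D, |f.1 x - g.1 x| < ε}

theorem subset_unifPolar_iff {f : CFn X} {B : Set X} {D : Set (CFn X)} {ε : ℝ} :
    B ⊆ unifPolar f D ε ↔ D ⊆ unifBall f B ε :=
  ⟨fun h _ hg _ hx => h hx _ hg, fun h _ hx _ hg => h hg _ hx⟩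

theorem isGKappaSet_unifPolar (f : CFn X) {D : Set (CFn X)} (hD : #D ≤ κ) (ε : ℝ) :
    IsGKappaSet κ (unifPolar f D ε) := by
  refine ⟨(fun g : CFn X => {x | |f.1 x - g.1 x| < ε}) '' D, ?_, mk_image_le.trans hD, ?_⟩
  · rintro _ ⟨g, -, rfl⟩
    exact isOpen_lt (f.2.sub g.2).abs continuous_const
  · ext x
    simp [unifPolar]

theorem exists_mk_le_frequently_mem_unifBall
    (H : ∀ 𝒢 : Set (Set X), (∀ G ∈ 𝒢, IsGKappaSet κ G) → IsBCover 𝔅 𝒢 →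
      ∃ 𝒢' ⊆ 𝒢, #𝒢' ≤ κ ∧ IsBCover 𝔅 𝒢')
    {ι : Type u} {l : ι → Filter (CFn X)} (hl : ∀ i, ∃ D ∈ l i, #D ≤ κ) {f : CFn X} {ε : ℝ}
    (hf : ∀ B ∈ 𝔅, ∃ i, ∃ᶠ g in l i, g ∈ unifBall f B ε) :
    ∃ J : Set ι, #J ≤ κ ∧ ∀ B ∈ 𝔅, ∃ i ∈ J, ∃ᶠ g in l i, g ∈ unifBall f B ε := by
  choose D hDl hDκ using hl
  choose i hi using fun B : 𝔅 => hf B B.2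
  let G (B : 𝔅) : Set X := unifPolar f (D (i B) ∩ unifBall f B ε) ε
  have isGKappaSet_G : ∀ S ∈ range G, IsGKappaSet κ S := forall_mem_range.2 fun B =>
    isGKappaSet_unifPolar f ((mk_le_mk_of_subset inter_subset_left).trans (hDκ _)) ε
  have isBCover_G : IsBCover 𝔅 (range G) := fun B hB =>
    ⟨_, mem_range_self ⟨B, hB⟩, subset_unifPolar_iff.2 inter_subset_right⟩
  obtain ⟨𝒢', h𝒢', h𝒢'κ, hcover⟩ := H _ isGKappaSet_G isBCover_G
  choose C hC using fun S : 𝒢' => h𝒢' S.2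
  refine ⟨range fun S => i (C S), mk_range_le.trans h𝒢'κ, fun B hB => ?_⟩
  obtain ⟨S, hS, hBS⟩ := hcover B hB
  have hBG : B ⊆ G (C ⟨S, hS⟩) := by rwa [hC]
  exact ⟨_, ⟨⟨S, hS⟩, rfl⟩, ((hi _).and_eventually (hDl _)).mono fun g hg =>
    subset_unifPolar_iff.1 hBG ⟨hg.2, hg.1⟩⟩

theorem memSp_of_forall_exists_isBCover (hB : IsBornology 𝔅) (hκ : ℵ₀ ≤ κ)
    (H : ∀ 𝒢 : Set (Set X), (∀ G ∈ 𝒢, IsGKappaSet κ G) → IsBCover 𝔅 𝒢 →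
      ∃ 𝒢' ⊆ 𝒢, #𝒢' ≤ κ ∧ IsBCover 𝔅 𝒢') :
    @MemSp (CFn X) (bornTopology 𝔅 hB) κ := by
  let _ := bornTopology 𝔅 hB
  refine memSp_of_forall_exists_clusterPt_biSup hκ fun f ι l hl hf => ?_
  simp only [clusterPt_bornTopology_iff, frequently_iSup] at hf
  simp only [clusterPt_bornTopology_iff, frequently_biSup]
  choose J hJκ hJ using fun n : ℕ => exists_mk_le_frequently_mem_unifBall H hl
    fun B hB => hf B hB (1 / (n + 1)) Nat.one_div_pos_of_nat
  refine ⟨⋃ n, J n, mk_iUnion_le_of_aleph0_le hκ (by simpa) hJκ, fun B hB ε hε => ?_⟩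
  obtain ⟨n, hn⟩ := exists_nat_one_div_lt hε
  obtain ⟨i, hiJ, hi⟩ := hJ n B hB
  exact ⟨i, mem_iUnion.2 ⟨n, hiJ⟩, hi.mono fun g hg x hx => (hg x hx).trans hn⟩

/-- `K` is completely separated from the complement of each of its open neighbourhoods. -/
def IsCompletelySeparated (K : Set X) : Prop :=
  ∀ U, IsOpen U → K ⊆ U → ∃ g : CFn X, EqOn g.1 0 K ∧ EqOn g.1 1 Uᶜ

/-- Every member of `𝔅` is contained in a completely separated member of `𝔅`. Compact bases in
completely regular spaces and closed bases in normal spaces have this property, which provides the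
test functions for reading off `𝔅`-covers by `G_κ`-sets from `C_𝔅(X)`. -/
def HasCompletelySeparatedBase (𝔅 : Set (Set X)) : Prop :=
  ∀ B ∈ 𝔅, ∃ K ∈ 𝔅, IsCompletelySeparated K ∧ B ⊆ K

theorem isCompletelySeparated_of_isCompact [CompletelyRegularSpace X] {K : Set X}
    (hK : IsCompact K) : IsCompletelySeparated K := by
  intro U hU hKU
  obtain ⟨V, hV, rfl⟩ := isInducing_stoneCechUnit.isOpen_iff.1 hU
  have image_closed : IsClosed (stoneCechUnit '' K) :=
    (hK.image continuous_stoneCechUnit).isClosed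
  obtain ⟨f, hf0, hf1, -⟩ := exists_continuous_zero_one_of_isClosed image_closed hV.isClosed_compl
    (disjoint_compl_right_iff_subset.2 (image_subset_iff.2 hKU))
  exact ⟨⟨f ∘ stoneCechUnit, f.continuous.comp continuous_stoneCechUnit⟩,
    fun x hx => hf0 (mem_image_of_mem _ hx), fun x hx => hf1 hx⟩

theorem HasCompactBase.hasCompletelySeparatedBase [CompletelyRegularSpace X]
    (h𝔅 : HasCompactBase 𝔅) : HasCompletelySeparatedBase 𝔅 := fun B hB =>
  let ⟨K, hK𝔅, hK, hBK⟩ := h𝔅 B hB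
  ⟨K, hK𝔅, isCompletelySeparated_of_isCompact hK, hBK⟩

theorem IsCompletelySeparated.exists_filter {K G : Set X} (hK : IsCompletelySeparated K)
    (hκ : ℵ₀ ≤ κ) (hG : IsGKappaSet κ G) (hKG : K ⊆ G) :
    ∃ l : Filter (CFn X), l.NeBot ∧ (∃ D ∈ l, #D ≤ κ) ∧ (∀ᶠ g in l, EqOn g.1 0 K) ∧
      ∀ x ∉ G, ∀ᶠ g in l, g.1 x = 1 := by
  obtain ⟨𝒪, h𝒪, h𝒪κ, rfl⟩ := hG
  have (F : Finset 𝒪) : ∃ g : CFn X, EqOn g.1 0 K ∧ EqOn g.1 1 (⋂ O ∈ F, O.1)ᶜ :=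
    hK _ (isOpen_biInter_finset fun O _ => h𝒪 O O.2)
      (subset_iInter₂ fun O _ => hKG.trans (sInter_subset_of_mem O.2))
  choose g hg0 hg1 using this
  refine ⟨map g atTop, inferInstance, ⟨range g, range_mem_map,
    mk_range_le.trans (mk_finset_le_of_aleph0_le hκ h𝒪κ)⟩, eventually_map.2 (.of_forall hg0),
    fun x hx => eventually_map.2 ?_⟩
  obtain ⟨O, hO, hxO⟩ : ∃ O ∈ 𝒪, x ∉ O := by simpa using hx
  filter_upwards [eventually_ge_atTop {⟨O, hO⟩}] with F hF
  exact hg1 F fun hxF => hxO (mem_iInter₂.1 hxF ⟨O, hO⟩ (Finset.singleton_subset_iff.1 hF))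

theorem MemSp.exists_isBCover (hB : IsBornology 𝔅) (h𝔅 : HasCompletelySeparatedBase 𝔅)
    (hκ : ℵ₀ ≤ κ) (hSp : @MemSp (CFn X) (bornTopology 𝔅 hB) κ) {𝒢 : Set (Set X)}
    (h𝒢 : ∀ G ∈ 𝒢, IsGKappaSet κ G) (hcover : IsBCover 𝔅 𝒢) :
    ∃ 𝒢' ⊆ 𝒢, #𝒢' ≤ κ ∧ IsBCover 𝔅 𝒢' := by
  let _ := bornTopology 𝔅 hB
  choose K hK𝔅 hK hBK using fun B : 𝔅 => h𝔅 B B.2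
  choose G hG𝒢 hKG using fun B : 𝔅 => hcover (K B) (hK𝔅 B)
  choose l hl hlκ hl0 hl1 using fun B : 𝔅 => (hK B).exists_filter hκ (h𝒢 _ (hG𝒢 B)) (hKG B)
  have clusterPt_l : ClusterPt (zeroFn X) (⨆ B, l B) := by
    refine (clusterPt_bornTopology_iff hB).2 fun B hB ε hε => frequently_iSup.2 ⟨⟨B, hB⟩, ?_⟩
    refine ((hl0 ⟨B, hB⟩).mono fun g hg x hx => ?_).frequently
    simpa [zeroFn, hg (hBK ⟨B, hB⟩ hx)] using hε
  obtain ⟨J, hJκ, hJ⟩ := hSp.exists_clusterPt_biSup (one_le_aleph0.trans hκ) hlκ clusterPt_l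
  refine ⟨G '' J, image_subset_iff.2 fun B _ => hG𝒢 B, mk_image_le.trans hJκ, fun B hB' => ?_⟩
  obtain ⟨C, hCJ, hC⟩ :=
    frequently_biSup.1 ((clusterPt_bornTopology_iff hB).1 hJ B hB' 1 one_pos)
  refine ⟨_, mem_image_of_mem G hCJ, fun x hx => by_contra fun hxG => ?_⟩
  obtain ⟨g, hgB, hgx⟩ := (hC.and_eventually (hl1 C x hxG)).exists
  simpa [zeroFn, hgx] using hgB x hx

end UniformConvergence

theorem stmt5_general {X : Type u} [TopologicalSpace X] {𝔅 : Set (Set X)} (hB : IsBornology 𝔅)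
    (h𝔅 : HasCompletelySeparatedBase 𝔅) {κ : Cardinal.{u}} (hκ : ℵ₀ ≤ κ) :
    @MemSp (CFn X) (bornTopology 𝔅 hB) κ ↔
      ∀ 𝒢 : Set (Set X), (∀ G ∈ 𝒢, IsGKappaSet κ G) → IsBCover 𝔅 𝒢 →
        ∃ 𝒢' ⊆ 𝒢, #𝒢' ≤ κ ∧ IsBCover 𝔅 𝒢' :=
  ⟨fun hSp _ => hSp.exists_isBCover hB h𝔅 hκ, memSp_of_forall_exists_isBCover hB hκ⟩

/-- For a Tychonoff `X`, a bornology `𝔅` with compact base and an infinite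
cardinal `κ`: `κ ∈ Sp(C_𝔅(X))` iff every `𝔅`-cover of `X` by `G_κ`-sets has a
`𝔅`-subcover of cardinality at most `κ`. -/
theorem stmt5 {X : Type u} [TopologicalSpace X] [T35Space X]
    (𝔅 : Set (Set X)) (hB : IsBornology 𝔅) (hcb : HasCompactBase 𝔅)
    (κ : Cardinal.{u}) (hκ : Cardinal.aleph0 ≤ κ) :
    @MemSp (CFn X) (bornTopology 𝔅 hB) κ ↔
      ∀ 𝒢 : Set (Set X), (∀ G ∈ 𝒢, IsGKappaSet κ G) → IsBCover 𝔅 𝒢 →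
        ∃ 𝒢' ⊆ 𝒢, Cardinal.mk 𝒢' ≤ κ ∧ IsBCover 𝔅 𝒢' :=
  stmt5_general hB hcb.hasCompletelySeparatedBase hκ
end
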